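/- (Invariance of the noncommutative discriminant.) Let R_d be the space of binary forms of degree d in variables X, Y over ℂ, with the SL(2,ℂ)-action (g·p)(v) = p(g⁻¹·v). Writing each p ∈ R_d as p = Σ_{j=0}^d binom(d,j) ξ_j(p) X^j Y^{d−j}, define the bilinear form F : R_d × R_d → ℂ by F(p, q) = Σ_{k=0}^{d} (−1)^k binom(d,k) ξ_{d−k}(p) ξ_k(q). Then F is SL(2,ℂ)-invariant: F(g·p, g·q) = F(p, q) for all g ∈ SL(2,ℂ) and all p, q ∈ R_d. (For d = 2 this is the noncommutative discriminant a₂a₀ − a₁a₁ + a₀a₂.) -/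

import Mathlib

/-- The binary form of degree `d` with (normalized) coefficients `ξ`, evaluated at the
vector `v ∈ ℂ²`:  `p_ξ(v) = Σ_{k=0}^{d} binom(d,k) ξ_k v₀^k v₁^{d−k}`. -/
noncomputable def Pval (d : ℕ) (ξ : Fin (d + 1) → ℂ) (v : Fin 2 → ℂ) : ℂ :=
  ∑ k : Fin (d + 1), (d.choose (k : ℕ) : ℂ) * ξ k * v 0 ^ (k : ℕ) * v 1 ^ (d - (k : ℕ))

/-!
The form `F(p, q)` is the classical apolar pairing. Pairing `p` with the power `(aX + bY)^d` of a
linear form gives the value `p(b, -a)`. Powers of linear forms span the forms of degree `d`, so we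
may take `q = (aX + bY)^d`, and then `q ∘ h` is again the power of a linear form. Since
`h J hᵀ = det h • J` for `J = !![0, 1; -1, 0]`, evaluating `p ∘ h` at the point attached to `q ∘ h`
is evaluating `p` at `det h • (b, -a)`, which by homogeneity yields
`F(p ∘ h, q ∘ h) = (det h)^d F(p, q)`.
-/

open Matrix

/-- Binary forms of degree `d` over `R`, encoded by their normalized coefficients: `ξ` stands for
`∑ k, (d.choose k) * ξ k * X ^ k * Y ^ (d - k)`. -/
abbrev BinaryForm (R : Type*) (d : ℕ) : Type _ := Fin (d + 1) → R

namespace BinaryForm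

theorem val_rev_eq_sub {d : ℕ} (k : Fin (d + 1)) : (k.rev : ℕ) = d - k := by
  rw [Fin.val_rev, Nat.add_sub_add_right]

theorem mk_sub_eq_rev {d : ℕ} (k : Fin (d + 1)) (hk : d - (k : ℕ) < d + 1) :
    ⟨d - (k : ℕ), hk⟩ = k.rev :=
  Fin.ext (val_rev_eq_sub k).symm

section CommRing

variable {R : Type*} [CommRing R] {d : ℕ}

/-- The polynomial function on `R²` defined by a binary form, as a linear function of the form.
Over `ℂ` it is `Pval`. -/
def eval : BinaryForm R d →ₗ[R] (Fin 2 → R) → R where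
  toFun ξ v := ∑ k : Fin (d + 1), (d.choose k : R) * ξ k * v 0 ^ (k : ℕ) * v 1 ^ (d - (k : ℕ))
  map_add' ξ η := by
    ext v
    simp only [Pi.add_apply, mul_add, add_mul, Finset.sum_add_distrib]
  map_smul' c ξ := by
    ext v
    simp only [Pi.smul_apply, smul_eq_mul, RingHom.id_apply, Finset.mul_sum]
    exact Finset.sum_congr rfl fun k _ => by ring

/-- The apolar pairing of binary forms of degree `d`, which is the noncommutative discriminant. -/
def apolarPairing : LinearMap.BilinForm R (BinaryForm R d) :=
  LinearMap.mk₂ R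
    (fun ξ η => ∑ k : Fin (d + 1), (-1 : R) ^ (k : ℕ) * (d.choose k : R) * ξ k.rev * η k)
    (fun ξ₁ ξ₂ η => by simp only [Pi.add_apply, mul_add, add_mul, Finset.sum_add_distrib])
    (fun c ξ η => by
      simp only [Pi.smul_apply, smul_eq_mul, Finset.mul_sum]
      exact Finset.sum_congr rfl fun k _ => by ring)
    (fun ξ η₁ η₂ => by simp only [Pi.add_apply, mul_add, Finset.sum_add_distrib])
    (fun c ξ η => by
      simp only [Pi.smul_apply, smul_eq_mul, Finset.mul_sum]
      exact Finset.sum_congr rfl fun k _ => by ring)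

/-- The `d`-th power of the linear form `a 0 * X + a 1 * Y`. -/
def linearPow (d : ℕ) (a : Fin 2 → R) : BinaryForm R d :=
  fun k => a 0 ^ (k : ℕ) * a 1 ^ (d - (k : ℕ))

theorem eval_apply (ξ : BinaryForm R d) (v : Fin 2 → R) :
    eval ξ v = ∑ k : Fin (d + 1),
      (d.choose k : R) * ξ k * v 0 ^ (k : ℕ) * v 1 ^ (d - (k : ℕ)) := rfl

theorem apolarPairing_apply (ξ η : BinaryForm R d) :
    apolarPairing ξ η = ∑ k : Fin (d + 1),
      (-1 : R) ^ (k : ℕ) * (d.choose k : R) * ξ k.rev * η k := rfl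

theorem eval_smul_right (ξ : BinaryForm R d) (t : R) (v : Fin 2 → R) :
    eval ξ (t • v) = t ^ d * eval ξ v := by
  rw [eval_apply, eval_apply, Finset.mul_sum]
  refine Finset.sum_congr rfl fun k _ => ?_
  rw [← pow_mul_pow_sub t k.is_le]
  simp only [Pi.smul_apply, smul_eq_mul, mul_pow]
  ring

theorem eval_linearPow (a v : Fin 2 → R) : eval (linearPow d a) v = (a ⬝ᵥ v) ^ d := by
  rw [eval_apply, dotProduct, Fin.sum_univ_two, add_pow, Finset.sum_range]
  refine Finset.sum_congr rfl fun k _ => ?_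
  simp only [linearPow, mul_pow]
  ring

theorem eval_linearPow_vecMul (a v : Fin 2 → R) (h : Matrix (Fin 2) (Fin 2) R) :
    eval (linearPow d (a ᵥ* h)) v = eval (linearPow d a) (h *ᵥ v) := by
  rw [eval_linearPow, eval_linearPow, dotProduct_mulVec]

theorem apolarPairing_linearPow (ξ : BinaryForm R d) (a : Fin 2 → R) :
    apolarPairing ξ (linearPow d a) = eval ξ ![a 1, -a 0] := by
  rw [apolarPairing_apply, eval_apply, ← Equiv.sum_comp Fin.revPerm]
  refine Finset.sum_congr rfl fun k _ => ?_
  simp only [linearPow, Fin.revPerm_apply, Fin.rev_rev, val_rev_eq_sub, Nat.choose_symm k.is_le,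
    Nat.sub_sub_self k.is_le, cons_val_zero, cons_val_one, neg_pow (a 0)]
  ring

/-- This is `h J hᵀ = det h • J` for `J = !![0, 1; -1, 0]`, applied to `a`. -/
theorem mulVec_vecMul_rotate (h : Matrix (Fin 2) (Fin 2) R) (a : Fin 2 → R) :
    h *ᵥ ![(a ᵥ* h) 1, -(a ᵥ* h) 0] = h.det • ![a 1, -a 0] := by
  ext i
  simp only [mulVec, vecMul, dotProduct, Fin.sum_univ_two, det_fin_two, Pi.smul_apply, smul_eq_mul,
    cons_val_zero, cons_val_one]
  fin_cases i <;> dsimp <;> ring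

theorem apolarPairing_linearPow_vecMul {ξ ξ' : BinaryForm R d} {h : Matrix (Fin 2) (Fin 2) R}
    (hξ : ∀ v, eval ξ' v = eval ξ (h *ᵥ v)) (a : Fin 2 → R) :
    apolarPairing ξ' (linearPow d (a ᵥ* h)) =
      h.det ^ d * apolarPairing ξ (linearPow d a) := by
  rw [apolarPairing_linearPow, hξ, mulVec_vecMul_rotate, eval_smul_right, apolarPairing_linearPow]

theorem apolarPairing_separatingLeft [IsDomain R] [CharZero R] :
    (apolarPairing (R := R) (d := d)).SeparatingLeft := by
  intro ξ hξ
  ext k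
  have coeff_eq_zero : (-1 : R) ^ (k.rev : ℕ) * (d.choose k.rev : R) * ξ k = 0 := by
    simpa [apolarPairing_apply, Pi.single_apply] using hξ (Pi.single k.rev 1)
  have choose_ne_zero : (d.choose k.rev : R) ≠ 0 :=
    Nat.cast_ne_zero.mpr (Nat.choose_pos k.rev.is_le).ne'
  exact (mul_eq_zero.mp coeff_eq_zero).resolve_left
    (mul_ne_zero (pow_ne_zero _ (neg_ne_zero.mpr one_ne_zero)) choose_ne_zero)

end CommRing

section Field

variable {K : Type*} [Field K] {d : ℕ}

theorem exists_sum_smul_linearPow_eq [Infinite K] (η : BinaryForm K d) :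
    ∃ (c : Fin (d + 1) → K) (a : Fin (d + 1) → Fin 2 → K),
      ∑ i, c i • linearPow d (a i) = η := by
  let node : Fin (d + 1) → K := fun i => Infinite.natEmbedding K i
  have node_injective : Function.Injective node :=
    (Infinite.natEmbedding K).injective.comp Fin.val_injective
  have isUnit_vandermonde : IsUnit (vandermonde node) :=
    (isUnit_iff_isUnit_det _).mpr (det_vandermonde_ne_zero_iff.mpr node_injective).isUnit
  obtain ⟨c, hc⟩ := vecMul_surjective_iff_isUnit.mpr isUnit_vandermonde η
  refine ⟨c, fun i => ![node i, 1], ?_⟩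
  rw [← hc]
  ext k
  simp [linearPow, vecMul_eq_sum, vandermonde_apply]

variable [CharZero K]

theorem eval_injective : Function.Injective (eval : BinaryForm K d →ₗ[K] (Fin 2 → K) → K) := by
  rw [injective_iff_map_eq_zero]
  intro ξ hξ
  refine apolarPairing_separatingLeft ξ fun η => ?_
  obtain ⟨c, a, rfl⟩ := exists_sum_smul_linearPow_eq η
  simp [apolarPairing_linearPow, hξ]

end Field

end BinaryForm

open BinaryForm

theorem discriminant_invariant_general {K : Type*} [Field K] [CharZero K] {d : ℕ}
    (h : Matrix (Fin 2) (Fin 2) K) (ξ η ξ' η' : BinaryForm K d)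
    (hξ : ∀ v, eval ξ' v = eval ξ (h *ᵥ v)) (hη : ∀ v, eval η' v = eval η (h *ᵥ v)) :
    apolarPairing ξ' η' = h.det ^ d * apolarPairing ξ η := by
  obtain ⟨c, a, rfl⟩ := exists_sum_smul_linearPow_eq η
  have hη' : η' = ∑ i, c i • linearPow d (a i ᵥ* h) := by
    refine eval_injective (funext fun v => ?_)
    simp only [hη, map_sum, map_smul, Finset.sum_apply, Pi.smul_apply, eval_linearPow_vecMul]
  simp only [hη', map_sum, map_smul, apolarPairing_linearPow_vecMul hξ, Finset.mul_sum,
    smul_eq_mul, mul_left_comm]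

/-- **Invariance of the noncommutative discriminant.**  Writing binary forms of degree
`d` through their normalized coefficients, `p = Σ_j binom(d,j) ξ_j X^j Y^{d−j}`,
the bilinear form `F(p, q) = Σ_k (−1)^k binom(d,k) ξ_{d−k}(p) ξ_k(q)` is
`SL(2,ℂ)`-invariant: if `ξ'` and `η'` are the coefficient vectors of `g·p` and `g·q`
(where `(g·p)(v) = p(g⁻¹·v)`), then `F(g·p, g·q) = F(p, q)`.  For `d = 2` this is the
noncommutative discriminant `a₂a₀ − a₁a₁ + a₀a₂`. -/
theorem discriminant_invariant (d : ℕ) (g : Matrix.SpecialLinearGroup (Fin 2) ℂ)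
    (ξ η ξ' η' : Fin (d + 1) → ℂ)
    (hξ : ∀ v, Pval d ξ' v = Pval d ξ
      (((g⁻¹ : Matrix.SpecialLinearGroup (Fin 2) ℂ) : Matrix (Fin 2) (Fin 2) ℂ).mulVec v))
    (hη : ∀ v, Pval d η' v = Pval d η
      (((g⁻¹ : Matrix.SpecialLinearGroup (Fin 2) ℂ) : Matrix (Fin 2) (Fin 2) ℂ).mulVec v)) :
    ∑ k : Fin (d + 1), (-1 : ℂ) ^ (k : ℕ) * (d.choose (k : ℕ) : ℂ) *
        ξ' ⟨d - (k : ℕ), by omega⟩ * η' k =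
      ∑ k : Fin (d + 1), (-1 : ℂ) ^ (k : ℕ) * (d.choose (k : ℕ) : ℂ) *
        ξ ⟨d - (k : ℕ), by omega⟩ * η k := by
  simpa only [apolarPairing_apply, mk_sub_eq_rev, (g⁻¹).det_coe, one_pow, one_mul] using
    discriminant_invariant_general (g⁻¹).1 ξ η ξ' η' hξ hη
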